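/- arXiv:2605.22257 — 2 statements merged into one kernel-verified Lean document; each statement's English description precedes it below -/
import Mathlib

section
/- Let S be a random variable on a probability space taking values in [0,1], and let N be a positive natural number. For each positive divisor K of N define the ensemble success probability s̄(K,N) = 1 − (E[(1−S)^(N/K)])^K. Then for any positive divisors K ≤ K' of N, s̄(K,N) ≤ s̄(K',N). -/
open MeasureTheory

/-- Proposition 5.2 (Monotonicity): the ensemble success probability
`s̄(K,N) = 1 − (E[(1−S)^(N/K)])^K` is monotone in the divisor `K` of `N`. -/
theorem ensemble_success_monotone {Ω : Type*} [MeasurableSpace Ω]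
    (P : Measure Ω) [IsProbabilityMeasure P]
    (S : Ω → ℝ) (hS : Measurable S)
    (hS0 : ∀ ω, 0 ≤ S ω) (hS1 : ∀ ω, S ω ≤ 1)
    (N K K' : ℕ) (hN : 0 < N) (hK : 0 < K) (hK' : 0 < K')
    (hKdvd : K ∣ N) (hK'dvd : K' ∣ N) (hKK' : K ≤ K') :
    1 - (∫ ω, (1 - S ω) ^ (N / K) ∂P) ^ K ≤
      1 - (∫ ω, (1 - S ω) ^ (N / K') ∂P) ^ K' := by
  have h0 : ∀ ω, 0 ≤ 1 - S ω := fun ω => sub_nonneg.2 (hS1 ω)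
  have hint : ∀ n : ℕ, Integrable (fun ω => (1 - S ω) ^ n) P := by
    intro n
    refine Integrable.of_bound (C := 1) (by fun_prop) (Filter.Eventually.of_forall fun ω => ?_)
    rw [Real.norm_of_nonneg (pow_nonneg (h0 ω) n)]
    exact pow_le_one₀ (h0 ω) (by linarith [hS0 ω])
  have hKR : (0 : ℝ) < K := by exact_mod_cast hK
  have hp : (1 : ℝ) ≤ (K' : ℝ) / K := by
    rw [le_div_iff₀ hKR, one_mul]
    exact_mod_cast hKK'
  have hab : ((N / K' : ℕ) : ℝ) * ((K' : ℝ) / K) = ((N / K : ℕ) : ℝ) := by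
    have h1 : ((N / K' : ℕ) : ℝ) * K' = N := by exact_mod_cast Nat.div_mul_cancel hK'dvd
    have h2 : ((N / K : ℕ) : ℝ) * K = N := by exact_mod_cast Nat.div_mul_cancel hKdvd
    rw [← mul_div_assoc, h1, ← h2]
    field_simp
  have hpow : ∀ ω, ((1 - S ω) ^ (N / K')) ^ ((K' : ℝ) / K) = (1 - S ω) ^ (N / K) := by
    intro ω
    rw [← Real.rpow_natCast, ← Real.rpow_mul (h0 ω), hab, Real.rpow_natCast]
  have hJ := (convexOn_rpow hp).map_integral_le (μ := P)
    (f := fun ω => (1 - S ω) ^ (N / K'))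
    (fun x _ => (Real.continuousAt_rpow_const x _ (Or.inr (by linarith))).continuousWithinAt)
    isClosed_Ici (Filter.Eventually.of_forall fun ω => pow_nonneg (h0 ω) _) (hint _)
    (by
      have : ((fun x : ℝ => x ^ ((K' : ℝ) / K)) ∘ fun ω => (1 - S ω) ^ (N / K'))
          = fun ω => (1 - S ω) ^ (N / K) := funext hpow
      rw [this]
      exact hint _)
  simp only [hpow] at hJ
  have hI : 0 ≤ ∫ ω, (1 - S ω) ^ (N / K') ∂P := integral_nonneg fun ω => pow_nonneg (h0 ω) _
  have h3 := pow_le_pow_left₀ (Real.rpow_nonneg hI _) hJ K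
  rw [← Real.rpow_natCast, ← Real.rpow_mul hI, div_mul_cancel₀ _ hKR.ne',
    Real.rpow_natCast] at h3
  linarith
end

section
/- Let S be a random variable on a probability space taking values in [0,1] that is not almost surely constant, let N be a positive natural number, and let K < K' be positive divisors of N. Then 1 − (E[(1−S)^(N/K)])^K < 1 − (E[(1−S)^(N/K')])^(K'), i.e. the ensemble success probability is strictly larger for K' than for K. -/
open MeasureTheory

/-- Strict part of Proposition 5.2: if `S` is not almost surely constant and
`K < K'` are positive divisors of `N`, the ensemble success probability is
strictly larger for `K'` than for `K`. -/
theorem ensemble_success_strict_mono {Ω : Type*} [MeasurableSpace Ω]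
    (P : Measure Ω) [IsProbabilityMeasure P]
    (S : Ω → ℝ) (hS : Measurable S)
    (hS0 : ∀ ω, 0 ≤ S ω) (hS1 : ∀ ω, S ω ≤ 1)
    (hSnc : ¬ ∃ c : ℝ, ∀ᵐ ω ∂P, S ω = c)
    (N K K' : ℕ) (hN : 0 < N) (hK : 0 < K) (hK' : 0 < K')
    (hKdvd : K ∣ N) (hK'dvd : K' ∣ N) (hKK' : K < K') :
    1 - (∫ ω, (1 - S ω) ^ (N / K) ∂P) ^ K <
      1 - (∫ ω, (1 - S ω) ^ (N / K') ∂P) ^ K' := by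
  obtain ⟨b, hb⟩ := hKdvd
  obtain ⟨a, ha⟩ := hK'dvd
  have hNb : N / K = b := by rw [hb]; exact Nat.mul_div_cancel_left _ hK
  have hNa : N / K' = a := by rw [ha]; exact Nat.mul_div_cancel_left _ hK'
  have ha0 : a ≠ 0 := by rintro rfl; omega
  rw [hNb, hNa]
  have hKr : (0:ℝ) < K := by exact_mod_cast hK
  have hp : (1:ℝ) < (K':ℝ) / K := by
    rw [one_lt_div hKr]; exact_mod_cast hKK'
  have hX0 : ∀ ω, 0 ≤ 1 - S ω := fun ω => sub_nonneg.2 (hS1 ω)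
  have hint : ∀ n : ℕ, Integrable (fun ω => (1 - S ω) ^ n) P := by
    intro n
    refine Integrable.of_bound (C := 1) (by fun_prop) (ae_of_all _ fun ω => ?_)
    rw [Real.norm_of_nonneg (pow_nonneg (hX0 ω) n)]
    exact pow_le_one₀ (hX0 ω) (by linarith [hS0 ω])
  have hcomp : ∀ ω, ((1 - S ω) ^ a) ^ ((K':ℝ) / K) = (1 - S ω) ^ b := by
    intro ω
    rw [← Real.rpow_natCast, ← Real.rpow_mul (hX0 ω), ← Real.rpow_natCast]
    congr 1
    have : (K:ℝ) * b = K' * a := by exact_mod_cast hb.symm.trans ha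
    field_simp
    linarith
  have hA0 : 0 ≤ ∫ ω, (1 - S ω) ^ a ∂P := integral_nonneg fun ω => pow_nonneg (hX0 ω) a
  have key := (strictConvexOn_rpow hp).ae_eq_const_or_map_average_lt (μ := P)
    (f := fun ω => (1 - S ω) ^ a)
    (Real.continuous_rpow_const (by linarith)).continuousOn isClosed_Ici
    (ae_of_all _ fun ω => pow_nonneg (hX0 ω) a) (hint a)
    ((hint b).congr (ae_of_all _ fun ω => (hcomp ω).symm))
  simp only [average_eq_integral, hcomp] at key
  rcases key with h | h
  · exfalso
    apply hSnc
    refine ⟨1 - (∫ ω, (1 - S ω) ^ a ∂P) ^ ((a:ℝ)⁻¹), ?_⟩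
    filter_upwards [h] with ω hω
    simp only [Function.const_apply] at hω
    rw [← hω, Real.pow_rpow_inv_natCast (hX0 ω) ha0]
    ring
  · have h2 := pow_lt_pow_left₀ h (Real.rpow_nonneg hA0 _) hK.ne'
    rw [← Real.rpow_mul_natCast hA0, div_mul_cancel₀ _ hKr.ne', Real.rpow_natCast] at h2
    linarith
end
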